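/- Let a > 0 and assume that g(r;a) > 0 for all r ∈ (0,∞) and that w(·;a) = ρ·g(·;a) is bounded on (0,∞). Then J(r;a) > 0 for every r ∈ (0,∞) and J(r;a) → 0 as r → ∞. -/

import Mathlib

/-!
Write `s = ρ'/ρ = 1 + (N-1)/r`. Since `g > 0`, the profile equation is the system
`f' = -g^{1/(p-1)}`, `g' = f - s g`; in particular `w' = ρ f`.

Substituting the resulting second order equation for `g` in `J'`, all terms cancel except one:
`J' = (p α / ((3p-2)³ r³)) Q(r + N - 1) g²` with
`Q(x) = -2(p-1)(2-p) x³ + (3p-4)(3p-2)(N-1) x + (3p-2)²(N-1)` (`hasDerivAt_Jred`).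
As `Q(x)/x` is strictly decreasing, `Q` changes sign at most once, from positive to negative, so at
each `r` either `J` is strictly increasing on `(0,r]` or strictly decreasing on `[r,∞)`. Therefore
`J > 0` as soon as `J` tends to `0` at both ends (`pos_of_ends`).

At the origin, `α → 0` while `g'` and `g/r` converge (`tendsto_Jred_zero`). At infinity,
`f` is nonincreasing and `w' = ρ f` with `w` positive and bounded, which forces `ρ f` to be bounded
(`rho_mul_f_bound`); hence `g` and `g'` are both `O(1/ρ)`, and `α = ρ^{2p/(3p-2)}` with
`2p/(3p-2) < 2` gives `J → 0` (`tendsto_Jred_atTop`).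
-/


open Real Set Filter MeasureTheory

/-- `f` is a solution of the profile equation with parameter `a`:
`f` is C¹ on `[0,∞)` with derivative `f'`, the map `r ↦ |f'(r)|^{p-2} f'(r)` is C¹ on `[0,∞)`
with derivative `F'`, the ODE
`(|f'|^{p-2}f')'(r) + ((N-1)/r)(|f'|^{p-2}f')(r) + f(r) - |f'(r)|^{p-1} = 0` holds for `r > 0`,
and `f 0 = a`, `f' 0 = 0`. -/
def IsProfileSol (N : ℕ) (p a : ℝ) (f f' F' : ℝ → ℝ) : Prop :=
  (∀ r ∈ Ici (0:ℝ), HasDerivWithinAt f (f' r) (Ici 0) r) ∧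
  ContinuousOn f' (Ici 0) ∧
  (∀ r ∈ Ici (0:ℝ), HasDerivWithinAt (fun s => |f' s| ^ (p - 2) * f' s) (F' r) (Ici 0) r) ∧
  ContinuousOn F' (Ici 0) ∧
  (∀ r, 0 < r →
    F' r + (((N : ℝ) - 1) / r) * (|f' r| ^ (p - 2) * f' r) + f r - |f' r| ^ (p - 1) = 0) ∧
  f 0 = a ∧ f' 0 = 0

/-- `g(r;a) = -|f'(r;a)|^{p-2} f'(r;a)`. -/
noncomputable def gFun (p : ℝ) (f' : ℝ → ℝ) (r : ℝ) : ℝ := -(|f' r| ^ (p - 2) * f' r)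

/-- `ρ(r) = r^{N-1} e^r`. -/
noncomputable def rho (N : ℕ) (r : ℝ) : ℝ := r ^ (N - 1) * Real.exp r

/-- the derivative of `ρ`. -/
noncomputable def rho' (N : ℕ) (r : ℝ) : ℝ :=
  (((N : ℝ) - 1) * r ^ (N - 2) + r ^ (N - 1)) * Real.exp r

/-- `w(r;a) = ρ(r) g(r;a)`. -/
noncomputable def wFun (N : ℕ) (p : ℝ) (f' : ℝ → ℝ) (r : ℝ) : ℝ := rho N r * gFun p f' r

/-- the derivative `w'(r;a) = ρ'(r) g(r;a) + ρ(r) g'(r;a)`, where `g' = -F'`. -/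
noncomputable def wDeriv (N : ℕ) (p : ℝ) (f' F' : ℝ → ℝ) (r : ℝ) : ℝ :=
  rho' N r * gFun p f' r - rho N r * F' r

/-- `α(r) = ρ(r)^{2p/(3p-2)}`. -/
noncomputable def alphaFun (N : ℕ) (p r : ℝ) : ℝ := rho N r ^ (2 * p / (3 * p - 2))

/-- `β(r) = (2(p-1)/(3p-2))(1 + (N-1)/r) α(r)`. -/
noncomputable def betaFun (N : ℕ) (p r : ℝ) : ℝ :=
  (2 * (p - 1) / (3 * p - 2)) * (1 + ((N : ℝ) - 1) / r) * alphaFun N p r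

/-- `γ(r)`. -/
noncomputable def gammaFun (N : ℕ) (p r : ℝ) : ℝ :=
  -(2 * (p - 1) * (2 - p) / (3 * p - 2) ^ 2
      + (4 * ((N : ℝ) - 1) * (p - 1) * (2 - p) / (3 * p - 2) ^ 2) * (1 / r)
      + (((N : ℝ) - 1) / (3 * p - 2) ^ 2)
          * (p * (3 * p - 2) + 2 * ((N : ℝ) - 1) * (p - 1) * (2 - p)) * (1 / r ^ 2))
    * alphaFun N p r

/-- The Pohozaev functional
`J(r;a) = (1/2)α g'² + β g g' + (1/2)γ g² + ((p-1)/p) δ g^{p/(p-1)}`, with `δ = α`, `g' = -F'`. -/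
noncomputable def Jfun (N : ℕ) (p : ℝ) (f' F' : ℝ → ℝ) (r : ℝ) : ℝ :=
  (1 / 2) * alphaFun N p r * (-(F' r)) ^ 2 + betaFun N p r * gFun p f' r * (-(F' r))
    + (1 / 2) * gammaFun N p r * gFun p f' r ^ 2
    + ((p - 1) / p) * alphaFun N p r * gFun p f' r ^ (p / (p - 1))

/-! ### The reduced functional and the Pohozaev identity -/

/-- The logarithmic derivative `s(r) = ρ'(r)/ρ(r) = 1 + (N-1)/r` of `ρ`. -/
noncomputable def sFun (N : ℕ) (r : ℝ) : ℝ := 1 + ((N : ℝ) - 1) / r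

/-- The quotient `h = γ/α`, written through `s` and `s' = -(N-1)/r²`. -/
noncomputable def hFun (N : ℕ) (p r : ℝ) : ℝ :=
  -(p / (3 * p - 2)) * (((N : ℝ) - 1) / r ^ 2)
    - (2 * (p - 1) * (2 - p) / (3 * p - 2) ^ 2) * sFun N r ^ 2

/-- The functional `J` as a function of `r`, `u = g'` and `g`. -/
noncomputable def Jred (N : ℕ) (p r u g : ℝ) : ℝ :=
  alphaFun N p r * (1 / 2 * u ^ 2 + (2 * (p - 1) / (3 * p - 2)) * sFun N r * g * u
    + 1 / 2 * hFun N p r * g ^ 2 + ((p - 1) / p) * g ^ (p / (p - 1)))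

/-- The cubic which carries the sign of `J'`, as a function of `x = r + (N-1)`, `m = N-1`. -/
noncomputable def Qpoly (p m x : ℝ) : ℝ :=
  -(2 * (p - 1) * (2 - p)) * x ^ 3 + (3 * p - 4) * (3 * p - 2) * m * x + (3 * p - 2) ^ 2 * m

lemma Jfun_eq_Jred (N : ℕ) (p : ℝ) (hp : 1 < p) (f' F' : ℝ → ℝ) (r : ℝ) (hr : 0 < r) :
    Jfun N p f' F' r = Jred N p r (-(F' r)) (gFun p f' r) := by
  have hD : 3 * p - 2 ≠ 0 := by linarith
  unfold Jfun Jred betaFun gammaFun hFun sFun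
  generalize alphaFun N p r = A
  generalize gFun p f' r ^ (p / (p - 1)) = P
  have : p ≠ 0 := by linarith
  field_simp
  ring

lemma rho_pos (N : ℕ) {r : ℝ} (hr : 0 < r) : 0 < rho N r := by
  unfold rho; positivity

lemma hasDerivAt_rho (N : ℕ) (hN : 2 ≤ N) {r : ℝ} (hr : 0 < r) :
    HasDerivAt (rho N) (sFun N r * rho N r) r := by
  obtain ⟨k, rfl⟩ : ∃ k, N = k + 2 := ⟨N - 2, by omega⟩
  have h := (hasDerivAt_pow (k + 2 - 1) r).mul (Real.hasDerivAt_exp r)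
  refine HasDerivAt.congr_deriv (f := rho (k + 2)) h ?_
  have e : k + 2 - 1 = k + 1 := by omega
  simp only [rho, sFun, e, Nat.add_sub_cancel]
  push_cast
  field_simp
  ring

lemma hasDerivAt_alpha (N : ℕ) (hN : 2 ≤ N) (p : ℝ) {r : ℝ} (hr : 0 < r) :
    HasDerivAt (alphaFun N p) (2 * p / (3 * p - 2) * sFun N r * alphaFun N p r) r := by
  have h := (hasDerivAt_rho N hN hr).rpow_const (p := 2 * p / (3 * p - 2))
    (Or.inl (rho_pos N hr).ne')
  refine HasDerivAt.congr_deriv (f := alphaFun N p) h ?_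
  rw [Real.rpow_sub_one (rho_pos N hr).ne']
  have := (rho_pos N hr).ne'
  unfold alphaFun
  field_simp

lemma hasDerivAt_sFun (N : ℕ) {r : ℝ} (hr : 0 < r) :
    HasDerivAt (sFun N) (-(((N : ℝ) - 1) / r ^ 2)) r := by
  have h := ((hasDerivAt_inv hr.ne').const_mul ((N : ℝ) - 1)).const_add 1
  refine HasDerivAt.congr_deriv (f := sFun N) ?_ (f' := ((N : ℝ) - 1) * -(r ^ 2)⁻¹) (by ring)
  exact h

lemma hasDerivAt_hFun (N : ℕ) (p : ℝ) {r : ℝ} (hr : 0 < r) :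
    HasDerivAt (hFun N p) (2 * (p / (3 * p - 2)) * (((N : ℝ) - 1) / r ^ 3)
      + 2 * (2 * (p - 1) * (2 - p) / (3 * p - 2) ^ 2) * sFun N r * (((N : ℝ) - 1) / r ^ 2)) r := by
  have h1 := ((((hasDerivAt_pow 2 r).inv (pow_ne_zero 2 hr.ne')).const_mul ((N : ℝ) - 1)).const_mul
    (-(p / (3 * p - 2)))).sub
    (((hasDerivAt_sFun N hr).pow 2).const_mul (2 * (p - 1) * (2 - p) / (3 * p - 2) ^ 2))
  refine HasDerivAt.congr_deriv (f := hFun N p) h1 ?_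
  by_cases hD : 3 * p - 2 = 0
  · simp [hD]
  push_cast
  field_simp
  ring

/-- The Pohozaev identity: the coefficients are chosen so that in `J'` every term except the one
in `g²` cancels. -/
lemma hasDerivAt_Jred (N : ℕ) (hN : 2 ≤ N) (p : ℝ) (hp : 1 < p) (f g : ℝ → ℝ)
    {r : ℝ} (hr : 0 < r) (hgr : 0 < g r)
    (hf : HasDerivAt f (-(g r ^ (1 / (p - 1)))) r)
    (hg : HasDerivAt g (f r - sFun N r * g r) r) :
    HasDerivAt (fun x => Jred N p x (f x - sFun N x * g x) (g x))
      (alphaFun N p r * (p / ((3 * p - 2) ^ 3 * r ^ 3)) * Qpoly p ((N : ℝ) - 1) (r + ((N : ℝ) - 1))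
        * g r ^ 2) r := by
  have hs := hasDerivAt_sFun N hr
  have hu := hf.sub (hs.mul hg)
  have hP := hg.rpow_const (p := p / (p - 1)) (Or.inl hgr.ne')
  have hE := ((((hu.pow 2).const_mul (1 / 2)).add
    (((hs.const_mul (2 * (p - 1) / (3 * p - 2))).mul hg).mul hu)).add
    (((hasDerivAt_hFun N p hr).const_mul (1 / 2)).mul (hg.pow 2))).add
    (hP.const_mul ((p - 1) / p))
  have h := (hasDerivAt_alpha N hN p hr).mul hE
  refine HasDerivAt.congr_deriv h ?_
  have hD : 3 * p - 2 ≠ 0 := by linarith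
  have hp1 : p - 1 ≠ 0 := by linarith
  have hp0 : p ≠ 0 := by linarith
  have e1 : p / (p - 1) - 1 = 1 / (p - 1) := by field_simp; ring
  have e2 : g r ^ (p / (p - 1)) = g r ^ (1 / (p - 1)) * g r := by
    rw [← Real.rpow_add_one hgr.ne']; congr 1; field_simp; ring
  simp only [Pi.add_apply, Pi.mul_apply, Pi.sub_apply, Pi.pow_apply]
  rw [e1, e2]
  unfold hFun Qpoly
  generalize g r ^ (1 / (p - 1)) = Y
  generalize alphaFun N p r = A
  simp only [sFun]
  generalize f r = F
  generalize g r = G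
  generalize (N : ℝ) - 1 = m
  simp only [Nat.cast_ofNat, Nat.add_one_sub_one, pow_one]
  -- keep the denominator `3p - 2` atomic while denominators are cleared
  generalize hDe : 3 * p - 2 = D at hD ⊢
  field_simp
  rw [← hDe]
  ring

/-! ### The sign of the derivative and positivity -/

/-- Once `Q` is nonpositive it stays negative, because `x ↦ Q(x)/x` is strictly decreasing. -/
lemma Qpoly_neg {p m x y : ℝ} (hp : 1 < p) (hp2 : p < 2) (hm : 0 < m) (hx : 0 < x) (hxy : x < y)
    (h : Qpoly p m x ≤ 0) : Qpoly p m y < 0 := by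
  have key : y * Qpoly p m x - x * Qpoly p m y
      = 2 * (p - 1) * (2 - p) * (x * y * (y ^ 2 - x ^ 2)) + (3 * p - 2) ^ 2 * m * (y - x) := by
    unfold Qpoly; ring
  have hy : 0 < y := hx.trans hxy
  have h1 : 0 < y ^ 2 - x ^ 2 := by nlinarith
  have h2 : 0 < (3 * p - 2) ^ 2 := by have : 0 < 3 * p - 2 := by linarith
                                      positivity
  have h3 : 0 < 2 * (p - 1) * (2 - p) * (x * y * (y ^ 2 - x ^ 2))
      + (3 * p - 2) ^ 2 * m * (y - x) := by
    have a1 : 0 < p - 1 := by linarith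
    have a2 : 0 < 2 - p := by linarith
    have a3 : 0 < y - x := by linarith
    positivity
  by_contra hc
  push Not at hc
  nlinarith [mul_nonneg hx.le hc, mul_nonneg hy.le (neg_nonneg.2 h)]

/-- `J` is first increasing and then decreasing, so it is positive if it vanishes at both ends. -/
lemma pos_of_ends (N : ℕ) (hN : 2 ≤ N) (p : ℝ) (hp : 1 < p) (hp2 : p < 2) (J c : ℝ → ℝ)
    (hc : ∀ r, 0 < r → 0 < c r)
    (hJ : ∀ r, 0 < r →
      HasDerivAt J (c r * Qpoly p ((N : ℝ) - 1) (r + ((N : ℝ) - 1))) r)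
    (h0 : Tendsto J (nhdsWithin 0 (Ioi 0)) (nhds 0)) (h1 : Tendsto J atTop (nhds 0)) :
    ∀ r, 0 < r → 0 < J r := by
  intro r hr
  have hm : (0 : ℝ) < (N : ℝ) - 1 := by
    have : (2 : ℝ) ≤ N := by exact_mod_cast hN
    linarith
  rcases lt_or_ge (Qpoly p ((N : ℝ) - 1) (r + ((N : ℝ) - 1))) 0 with hq | hq
  · have hanti : StrictAntiOn J (Ici r) := by
      apply strictAntiOn_of_deriv_neg (convex_Ici r)
      · intro x hx
        exact (hJ x (hr.trans_le hx)).continuousAt.continuousWithinAt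
      · intro x hx
        rw [interior_Ici] at hx
        have hx0 : 0 < x := hr.trans hx
        rw [(hJ x hx0).deriv]
        exact mul_neg_of_pos_of_neg (hc x hx0)
          (Qpoly_neg hp hp2 hm (by linarith) (by simpa using hx) hq.le)
    have hle : 0 ≤ J (r + 1) := by
      refine le_of_tendsto h1 ?_
      filter_upwards [eventually_ge_atTop (r + 1)] with x hx
      exact hanti.antitoneOn (by simp) (by simp only [mem_Ici]; linarith) hx
    exact hle.trans_lt (hanti (by simp) (by simp) (by linarith))
  · have hmono : StrictMonoOn J (Ioc 0 r) := by
      apply strictMonoOn_of_deriv_pos (convex_Ioc 0 r)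
      · intro x hx
        exact (hJ x hx.1).continuousAt.continuousWithinAt
      · intro x hx
        rw [interior_Ioc] at hx
        rw [(hJ x hx.1).deriv]
        refine mul_pos (hc x hx.1) ?_
        by_contra hcon
        push Not at hcon
        exact absurd (Qpoly_neg hp hp2 hm (by linarith [hx.1]) (by simpa using hx.2) hcon)
          (not_lt.2 hq)
    have hle : 0 ≤ J (r / 2) := by
      refine le_of_tendsto h0 ?_
      filter_upwards [Ioo_mem_nhdsGT (half_pos hr)] with x hx
      exact hmono.monotoneOn ⟨hx.1, by linarith [hx.2]⟩ ⟨by linarith, by linarith⟩ hx.2.le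
    exact hle.trans_lt (hmono ⟨by linarith, by linarith⟩ ⟨hr, le_rfl⟩ (by linarith))

/-! ### Limits at the origin and at infinity -/

/-- At the origin `α → 0`, while `g/r` and `g'` stay convergent, so the `1/r` and `1/r²` in the
coefficients are absorbed by the factors `g`. -/
lemma tendsto_Jred_zero (N : ℕ) (hN : 2 ≤ N) (p : ℝ) (hp : 1 < p) (u g : ℝ → ℝ) (L : ℝ)
    (hu : Tendsto u (nhdsWithin 0 (Ioi 0)) (nhds L))
    (hgr : Tendsto (fun r => g r / r) (nhdsWithin 0 (Ioi 0)) (nhds L)) :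
    Tendsto (fun r => Jred N p r (u r) (g r)) (nhdsWithin 0 (Ioi 0)) (nhds 0) := by
  have hid : Tendsto (fun r : ℝ => r) (nhdsWithin 0 (Ioi 0)) (nhds 0) :=
    tendsto_id.mono_left nhdsWithin_le_nhds
  have hg : Tendsto g (nhdsWithin 0 (Ioi 0)) (nhds 0) := by
    have h := hgr.mul hid
    rw [mul_zero] at h
    refine h.congr' ?_
    filter_upwards [self_mem_nhdsWithin] with r hr
    exact div_mul_cancel₀ _ (ne_of_gt hr)
  have hP : Tendsto (fun r => g r ^ (p / (p - 1))) (nhdsWithin 0 (Ioi 0)) (nhds 0) := by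
    have hpos : 0 < p / (p - 1) := div_pos (by linarith) (by linarith)
    have h := hg.rpow_const (p := p / (p - 1)) (Or.inr hpos.le)
    rwa [Real.zero_rpow hpos.ne'] at h
  have hα : Tendsto (alphaFun N p) (nhdsWithin 0 (Ioi 0)) (nhds 0) := by
    have hpos : 0 < 2 * p / (3 * p - 2) := div_pos (by linarith) (by linarith)
    have hc : Continuous (alphaFun N p) := by
      unfold alphaFun rho
      exact Continuous.rpow_const (by fun_prop) (fun _ => Or.inr hpos.le)
    have h := (hc.tendsto 0).mono_left (nhdsWithin_le_nhds (s := Ioi 0))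
    have e : alphaFun N p 0 = 0 := by
      unfold alphaFun rho
      rw [zero_pow (by omega), zero_mul, Real.zero_rpow hpos.ne']
    rwa [e] at h
  have hsg : Tendsto (fun r => g r + ((N : ℝ) - 1) * (g r / r)) (nhdsWithin 0 (Ioi 0))
      (nhds (0 + ((N : ℝ) - 1) * L)) := hg.add (hgr.const_mul _)
  have h := hα.mul (((((hu.pow 2).const_mul (1 / 2)).add
    ((hsg.const_mul (2 * (p - 1) / (3 * p - 2))).mul hu)).add
    ((((hgr.pow 2).const_mul (-(p / (3 * p - 2)) * ((N : ℝ) - 1))).sub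
      ((hsg.pow 2).const_mul (2 * (p - 1) * (2 - p) / (3 * p - 2) ^ 2))).const_mul (1 / 2))).add
    (hP.const_mul ((p - 1) / p)))
  rw [zero_mul] at h
  refine h.congr' ?_
  filter_upwards [self_mem_nhdsWithin] with r hr
  have hr0 : r ≠ 0 := ne_of_gt hr
  unfold Jred hFun sFun
  congr 1
  congr 1
  congr 1
  · congr 1
    field_simp
  · have e : g r + ((N : ℝ) - 1) * (g r / r) = (1 + ((N : ℝ) - 1) / r) * g r := by
      field_simp
    rw [e]
    generalize 1 + ((N : ℝ) - 1) / r = S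
    ring

lemma tendsto_rho_atTop (N : ℕ) : Tendsto (rho N) atTop atTop := by
  refine tendsto_atTop_mono' _ ?_ Real.tendsto_exp_atTop
  filter_upwards [eventually_ge_atTop 1] with r hr
  exact le_mul_of_one_le_left (Real.exp_pos r).le (one_le_pow₀ hr)

/-- With `v = ρ^{p/(3p-2)} = √α`, the functional is a quadratic form in `v u`, `v g` with bounded
coefficients, plus a term of the form `(v g)² g^{(2-p)/(p-1)}`. As `p/(3p-2) < 1`, boundedness of
`ρ u` and `ρ g` makes `v u` and `v g` vanish at infinity. -/
lemma tendsto_Jred_atTop (N : ℕ) (p : ℝ) (hp : 1 < p) (hp2 : p < 2) (u g : ℝ → ℝ) (C : ℝ)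
    (hgpos : ∀ r, 0 < r → 0 < g r)
    (hu : ∀ᶠ r in atTop, |rho N r * u r| ≤ C) (hg : ∀ᶠ r in atTop, |rho N r * g r| ≤ C) :
    Tendsto (fun r => Jred N p r (u r) (g r)) atTop (nhds 0) := by
  have hD : 0 < 3 * p - 2 := by linarith
  have small : ∀ z : ℝ → ℝ, (∀ᶠ r in atTop, |rho N r * z r| ≤ C) → ∀ e : ℝ, e < 1 →
      Tendsto (fun r => rho N r ^ e * z r) atTop (nhds 0) := by
    intro z hz e he
    have h0 : Tendsto (fun r => rho N r ^ (-(1 - e))) atTop (nhds 0) :=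
      (tendsto_rpow_neg_atTop (by linarith : 0 < 1 - e)).comp (tendsto_rho_atTop N)
    have hb : IsBoundedUnder (· ≤ ·) atTop (fun r => ‖rho N r * z r‖) :=
      ⟨C, by simpa [Filter.eventually_map] using hz⟩
    refine (h0.zero_mul_isBoundedUnder_le hb).congr' ?_
    filter_upwards [eventually_gt_atTop 0] with r hr
    have hρ := rho_pos N hr
    rw [← mul_assoc, ← Real.rpow_add_one hρ.ne']
    congr 2; ring
  have hθ : p / (3 * p - 2) < 1 := by rw [div_lt_one hD]; linarith
  have hvu := small u hu _ hθ
  have hvg := small g hg _ hθ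
  have hg0 : Tendsto g atTop (nhds 0) := by
    refine (small g hg 0 one_pos).congr (fun r => ?_)
    rw [Real.rpow_zero, one_mul]
  have hgp : Tendsto (fun r => g r ^ ((2 - p) / (p - 1))) atTop (nhds 0) := by
    have hpos : 0 < (2 - p) / (p - 1) := div_pos (by linarith) (by linarith)
    have h := hg0.rpow_const (p := (2 - p) / (p - 1)) (Or.inr hpos.le)
    rwa [Real.zero_rpow hpos.ne'] at h
  have hs : Tendsto (sFun N) atTop (nhds (1 + 0)) :=
    tendsto_const_nhds.add (tendsto_id.const_div_atTop _)
  have hh : Tendsto (hFun N p) atTop (nhds (-(p / (3 * p - 2)) * 0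
      - (2 * (p - 1) * (2 - p) / (3 * p - 2) ^ 2) * (1 + 0) ^ 2)) :=
    (((tendsto_pow_atTop (two_ne_zero)).const_div_atTop _).const_mul _).sub
      ((hs.pow 2).const_mul _)
  have h := ((((hvu.pow 2).const_mul (1 / 2)).add
    (((hs.const_mul (2 * (p - 1) / (3 * p - 2))).mul hvg).mul hvu)).add
    ((hh.const_mul (1 / 2)).mul (hvg.pow 2))).add
    (((hvg.pow 2).mul hgp).const_mul ((p - 1) / p))
  simp only [mul_zero, ne_eq, OfNat.ofNat_ne_zero, not_false_eq_true, zero_pow, add_zero] at h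
  refine h.congr' ?_
  filter_upwards [eventually_gt_atTop 0] with r hr
  have hρ := rho_pos N hr
  have e1 : alphaFun N p r = (rho N r ^ (p / (3 * p - 2))) ^ 2 := by
    unfold alphaFun
    rw [← Real.rpow_natCast, ← Real.rpow_mul hρ.le]
    congr 1; push_cast; ring
  have e2 : g r ^ (p / (p - 1)) = g r ^ 2 * g r ^ ((2 - p) / (p - 1)) := by
    rw [← Real.rpow_natCast, ← Real.rpow_add (hgpos r hr)]
    have : p - 1 ≠ 0 := by linarith
    congr 1; push_cast; field_simp; ring
  unfold Jred
  rw [e1, e2]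
  ring

/-! ### Decay of `f` -/

/-- Shifting the argument of `ρ` by one costs only a constant factor. -/
lemma rho_le_shift (N : ℕ) {r : ℝ} (hr : 2 ≤ r) :
    rho N r ≤ (2 ^ (N - 1) * Real.exp 1) * rho N (r - 1) := by
  unfold rho
  have e : Real.exp r = Real.exp 1 * Real.exp (r - 1) := by rw [← Real.exp_add]; congr 1; ring
  have h : r ^ (N - 1) ≤ 2 ^ (N - 1) * (r - 1) ^ (N - 1) := by
    rw [← mul_pow]; exact pow_le_pow_left₀ (by linarith) (by linarith) _
  rw [e]
  calc r ^ (N - 1) * (Real.exp 1 * Real.exp (r - 1))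
      ≤ (2 ^ (N - 1) * (r - 1) ^ (N - 1)) * (Real.exp 1 * Real.exp (r - 1)) := by gcongr
    _ = _ := by ring

lemma rho_mono (N : ℕ) {x y : ℝ} (hx : 0 < x) (hxy : x ≤ y) : rho N x ≤ rho N y := by
  have hy : 0 < y := hx.trans_le hxy
  unfold rho; gcongr

/-- If `w > 0` is bounded, `w' = ρ f` and `f` is nonincreasing, then `f ≥ 0` and `ρ f` is bounded
away from the origin. A negative value of `f` would force `w → -∞`; the upper bound comes from
the increment of `w` over `[r-1, r]`. -/
lemma rho_mul_f_bound (N : ℕ) (f w : ℝ → ℝ) (M : ℝ)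
    (hf : AntitoneOn f (Ioi 0)) (hw : ∀ r, 0 < r → HasDerivAt w (rho N r * f r) r)
    (hwpos : ∀ r, 0 < r → 0 < w r) (hM : ∀ r, 0 < r → w r ≤ M) :
    ∀ r, 2 ≤ r → |rho N r * f r| ≤ 2 ^ (N - 1) * Real.exp 1 * M := by
  have mvt : ∀ x y, 0 < x → x < y → ∃ z ∈ Ioo x y, rho N z * f z = (w y - w x) / (y - x) := by
    intro x y hx hxy
    refine exists_hasDerivAt_eq_slope w _ hxy ?_ ?_
    · intro z hz; exact (hw z (hx.trans_le hz.1)).continuousAt.continuousWithinAt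
    · intro z hz; exact hw z (hx.trans hz.1)
  have hf0 : ∀ r, 0 < r → 0 ≤ f r := by
    intro r hr
    by_contra hc
    push Not at hc
    have hρ := rho_pos N hr
    have hk : 0 < rho N r * (-f r) := mul_pos hρ (by linarith)
    -- the line of slope `ρ(r) f(r) < 0` through `(r, w r)` reaches `0` at this distance
    obtain ⟨T, hT⟩ : ∃ T, T = w r / (rho N r * (-f r)) := ⟨_, rfl⟩
    have hT0 : 0 < T := hT ▸ div_pos (hwpos r hr) hk
    obtain ⟨z, hz, hze⟩ := mvt r (r + T) hr (by linarith)
    have h1 : f z ≤ f r := hf hr (hr.trans hz.1) hz.1.le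
    have h2 : rho N r ≤ rho N z := rho_mono N hr hz.1.le
    have h3 : rho N z * f z ≤ rho N r * f r := by nlinarith [rho_pos N hr]
    rw [hze, div_le_iff₀ (by linarith)] at h3
    have h4 : T * (rho N r * (-f r)) = w r := by rw [hT, div_mul_cancel₀ _ hk.ne']
    have h5 := hwpos (r + T) (by linarith)
    nlinarith
  intro r hr
  have hr0 : 0 < r := by linarith
  have hr1 : 0 < r - 1 := by linarith
  rw [abs_of_nonneg (mul_nonneg (rho_pos N hr0).le (hf0 r hr0))]
  obtain ⟨z, hz, hze⟩ := mvt (r - 1) r hr1 (by linarith)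
  have hz0 : 0 < z := hr1.trans hz.1
  have h1 : rho N (r - 1) * f r ≤ rho N z * f z :=
    mul_le_mul (rho_mono N hr1 hz.1.le) (hf hz0 hr0 hz.2.le) (hf0 r hr0) (rho_pos N hz0).le
  have h2 : rho N (r - 1) * f r ≤ M := by
    rw [hze] at h1
    have : r - (r - 1) = 1 := by ring
    rw [this, div_one] at h1
    linarith [hM r hr0, hwpos (r - 1) hr1]
  calc rho N r * f r ≤ (2 ^ (N - 1) * Real.exp 1 * rho N (r - 1)) * f r :=
        mul_le_mul_of_nonneg_right (rho_le_shift N hr) (hf0 r hr0)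
    _ = 2 ^ (N - 1) * Real.exp 1 * (rho N (r - 1) * f r) := by ring
    _ ≤ _ := by gcongr

/-! ### Conclusion for profile solutions -/

/-- Where `g > 0`, the relation `g = -|f'|^{p-2} f'` inverts to `f' = -g^{1/(p-1)}`. -/
lemma deriv_of_gFun_pos {p : ℝ} (hp : 1 < p) (f' : ℝ → ℝ) (r : ℝ) (h : 0 < gFun p f' r) :
    |f' r| ^ (p - 1) = gFun p f' r ∧ f' r = -(gFun p f' r ^ (1 / (p - 1))) := by
  have hneg : f' r < 0 := by
    by_contra hc
    push Not at hc
    have : 0 ≤ |f' r| ^ (p - 2) * f' r := by positivity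
    unfold gFun at h
    linarith
  have habs : 0 < |f' r| := abs_pos.2 hneg.ne
  have e : |f' r| ^ (p - 1) = gFun p f' r := by
    have : p - 1 = (p - 2) + 1 := by ring
    rw [this, Real.rpow_add_one habs.ne']
    unfold gFun
    rw [abs_of_neg hneg]
    ring
  refine ⟨e, ?_⟩
  rw [← e, ← Real.rpow_mul habs.le, mul_one_div_cancel (by linarith), Real.rpow_one,
    abs_of_neg hneg, neg_neg]

/-- if `g(·;a) > 0` on `(0,∞)` and `w(·;a)` is bounded, then `J(·;a) > 0`
on `(0,∞)` and `J(r;a) → 0` as `r → ∞`. -/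
theorem stmt15 (N : ℕ) (hN : 2 ≤ N) (p : ℝ)
    (hp1 : 2 * (N : ℝ) / ((N : ℝ) + 1) < p) (hp2 : p < 2)
    (a : ℝ) (ha : 0 < a)
    (f f' F' : ℝ → ℝ) (hf : IsProfileSol N p a f f' F')
    (hg : ∀ r, 0 < r → 0 < gFun p f' r)
    (hbdd : ∃ M : ℝ, ∀ r, 0 < r → |wFun N p f' r| ≤ M) :
    (∀ r, 0 < r → 0 < Jfun N p f' F' r) ∧
    Filter.Tendsto (Jfun N p f' F') Filter.atTop (nhds 0) := by
  have hN' : (2 : ℝ) ≤ N := by exact_mod_cast hN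
  have hp : 1 < p := by
    refine lt_of_le_of_lt ?_ hp1
    rw [le_div_iff₀ (by linarith)]
    linarith
  obtain ⟨hfd, -, hFd, hFc, hode, -, hf0⟩ := hf
  obtain ⟨M, hM⟩ := hbdd
  set g := gFun p f' with hgdef
  have hode' : ∀ r, 0 < r → -(F' r) = f r - sFun N r * g r := by
    intro r hr
    have h := hode r hr
    rw [(deriv_of_gFun_pos hp f' r (hg r hr)).1] at h
    have e : |f' r| ^ (p - 2) * f' r = -g r := by rw [hgdef, gFun, neg_neg]
    rw [e] at h
    unfold sFun
    linarith
  have hfd' : ∀ r, 0 < r → HasDerivAt f (-(g r ^ (1 / (p - 1)))) r := by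
    intro r hr
    rw [← (deriv_of_gFun_pos hp f' r (hg r hr)).2]
    exact (hfd r hr.le).hasDerivAt (Ici_mem_nhds hr)
  have hgd : ∀ r ∈ Ici (0 : ℝ), HasDerivWithinAt g (-(F' r)) (Ici 0) r :=
    fun r hr => (hFd r hr).neg
  have hgd' : ∀ r, 0 < r → HasDerivAt g (f r - sFun N r * g r) r := by
    intro r hr
    rw [← hode' r hr]
    exact (hgd r hr.le).hasDerivAt (Ici_mem_nhds hr)
  have hanti : AntitoneOn f (Ioi 0) := by
    apply antitoneOn_of_deriv_nonpos (convex_Ioi 0)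
    · intro x hx; exact (hfd' x hx).continuousAt.continuousWithinAt
    · intro x hx
      rw [interior_Ioi] at hx
      exact (hfd' x hx).differentiableAt.differentiableWithinAt
    · intro x hx
      rw [interior_Ioi] at hx
      rw [(hfd' x hx).deriv]
      have := (Real.rpow_pos_of_pos (hg x hx) (1 / (p - 1))).le
      linarith
  have hwd : ∀ r, 0 < r → HasDerivAt (fun x => rho N x * g x) (rho N r * f r) r := by
    intro r hr
    refine ((hasDerivAt_rho N hN hr).mul (hgd' r hr)).congr_deriv ?_
    ring
  have hρf := rho_mul_f_bound N f (fun x => rho N x * g x) M hanti hwd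
    (fun r hr => mul_pos (rho_pos N hr) (hg r hr)) (fun r hr => (le_abs_self _).trans (hM r hr))
  have hM0 : 0 ≤ M := (abs_nonneg _).trans (hM 1 one_pos)
  -- `1 ≤ s ≤ N` for `r ≥ 1`, hence `|ρ g'| ≤ |ρ f| + s |ρ g|` is bounded
  have hρu : ∀ᶠ r in atTop, |rho N r * -(F' r)| ≤ 2 ^ (N - 1) * Real.exp 1 * M + N * M := by
    filter_upwards [eventually_ge_atTop 2] with r hr
    have hr0 : 0 < r := by linarith
    have hs : |sFun N r| ≤ N := by
      have h1 : ((N : ℝ) - 1) / r ≤ (N : ℝ) - 1 := div_le_self (by linarith) (by linarith)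
      have h2 : 0 ≤ ((N : ℝ) - 1) / r := div_nonneg (by linarith) hr0.le
      unfold sFun
      rw [abs_of_nonneg (by linarith)]
      linarith
    have e : rho N r * -(F' r) = rho N r * f r - sFun N r * (rho N r * g r) := by
      rw [hode' r hr0]; ring
    rw [e]
    refine (abs_sub _ _).trans (add_le_add (hρf r hr) ?_)
    rw [abs_mul]
    exact mul_le_mul hs (hM r hr0) (abs_nonneg _) (by linarith)
  have hρg : ∀ᶠ r in atTop, |rho N r * g r| ≤ 2 ^ (N - 1) * Real.exp 1 * M + N * M := by
    filter_upwards [eventually_gt_atTop 0] with r hr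
    refine (hM r hr).trans ?_
    have h1 : 0 ≤ 2 ^ (N - 1) * Real.exp 1 * M := by positivity
    nlinarith
  have hinf : Tendsto (Jfun N p f' F') atTop (nhds 0) := by
    refine (tendsto_Jred_atTop N p hp hp2 (fun r => -(F' r)) g _ hg hρu hρg).congr' ?_
    filter_upwards [eventually_gt_atTop 0] with r hr
    exact (Jfun_eq_Jred N p hp f' F' r hr).symm
  refine ⟨?_, hinf⟩
  have hzero : Tendsto (Jfun N p f' F') (nhdsWithin 0 (Ioi 0)) (nhds 0) := by
    have hu : Tendsto (fun r => -(F' r)) (nhdsWithin 0 (Ioi 0)) (nhds (-(F' 0))) :=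
      ((hFc 0 (by simp)).mono Ioi_subset_Ici_self).tendsto.neg
    have hg0 : g 0 = 0 := by rw [hgdef, gFun, hf0, mul_zero, neg_zero]
    have hgr : Tendsto (fun r => g r / r) (nhdsWithin 0 (Ioi 0)) (nhds (-(F' 0))) := by
      have h := (hasDerivWithinAt_iff_tendsto_slope' (by simp)).1
        ((hgd 0 (by simp)).mono Ioi_subset_Ici_self)
      refine h.congr (fun r => ?_)
      rw [slope_def_field, hg0, sub_zero, sub_zero]
    refine (tendsto_Jred_zero N hN p hp _ g _ hu hgr).congr' ?_
    filter_upwards [self_mem_nhdsWithin] with r hr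
    exact (Jfun_eq_Jred N p hp f' F' r hr).symm
  refine pos_of_ends N hN p hp hp2 _
    (fun r => alphaFun N p r * (p / ((3 * p - 2) ^ 3 * r ^ 3)) * g r ^ 2) ?_ ?_ hzero hinf
  · intro r hr
    have h1 : 0 < alphaFun N p r := Real.rpow_pos_of_pos (rho_pos N hr) _
    have h2 : 0 < 3 * p - 2 := by linarith
    have h3 := hg r hr
    positivity
  · intro r hr
    refine ((hasDerivAt_Jred N hN p hp f g hr (hg r hr) (hfd' r hr)
      (hgd' r hr)).congr_of_eventuallyEq ?_).congr_deriv (by ring)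
    filter_upwards [Ioi_mem_nhds hr] with x hx
    rw [Jfun_eq_Jred N p hp f' F' x hx, hode' x hx]
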